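/- In the online Ramsey game with targets red C₄ and blue P₆, consider the position in which the five edges v₁v₂, v₂v₃, v₃v₄, v₄v₅, v₅v₆ of a path on six distinct vertices have been colored blue, red, red, blue, blue respectively (case B8). From this position Builder can force a red copy of C₄ or a blue copy of P₆ within at most 6 additional rounds, so within at most 11 rounds in total. -/

import Mathlib

open SimpleGraph

/-- The set `S` of edges of the infinite complete graph on `ℕ` contains a copy of
the graph `G`: there is an injective map of the vertices of `G` into `ℕ` sending
every edge of `G` into `S`. -/
def HasCopy {V : Type*} (G : SimpleGraph V) (S : Set (Sym2 ℕ)) : Prop :=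
  ∃ f : V → ℕ, Function.Injective f ∧ ∀ a b, G.Adj a b → s(f a, f b) ∈ S

/-- `BuilderWinsIn G H R B r` means: in the online Ramsey game with targets a red copy
of `G` and a blue copy of `H`, from the position in which the edges in `R` have been
colored red and the edges in `B` have been colored blue, Builder has a strategy that
guarantees, against every Painter strategy, that within at most `r` further rounds the
colored edges contain a red copy of `G` or a blue copy of `H`.  (In each round Builder
chooses a previously unchosen non-loop edge of the infinite complete graph on `ℕ`, and
Painter immediately colors it red or blue; so Builder wins within `r + 1` rounds iff he
has already won, or he can choose an edge such that whichever color Painter gives it,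
he can win within `r` further rounds.) -/
def BuilderWinsIn {V W : Type*} (G : SimpleGraph V) (H : SimpleGraph W) :
    Set (Sym2 ℕ) → Set (Sym2 ℕ) → ℕ → Prop
  | R, B, 0 => HasCopy G R ∨ HasCopy H B
  | R, B, (r + 1) => HasCopy G R ∨ HasCopy H B ∨
      ∃ e : Sym2 ℕ, ¬ e.IsDiag ∧ e ∉ R ∧ e ∉ B ∧
        BuilderWinsIn G H (insert e R) B r ∧ BuilderWinsIn G H R (insert e B) r

/-- The online size Ramsey number `ř(G, H)`: the least `t` such that, starting from the
empty position, Builder can force a red copy of `G` or a blue copy of `H` within at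
most `t` rounds. -/
noncomputable def onlineRamsey {V W : Type*} (G : SimpleGraph V) (H : SimpleGraph W) : ℕ :=
  sInf {t | BuilderWinsIn G H ∅ ∅ t}

/-!
Let `a b c d` be the blue-red-red initial part of the position and let a blue path `d :: l` continue
it. Builder first plays `ac`. If it is blue, then `b a c` and `d :: l` are disjoint blue paths whose
ends span a four-cycle of edges, one of them (`cd`) already red, and Painter cannot color the other
three: all red gives a red `C₄`, a blue one joins the two paths. If it is red, Builder plays `ad`
and then uses a fresh vertex `x`. The red star at `c` makes any two red edges from `x` to its leaves
close a `C₄`, while blue edges at `x` lengthen a blue path that lacks only one vertex.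
-/

namespace BuilderWinsIn

variable {V W : Type*} {G : SimpleGraph V} {H : SimpleGraph W} {R B : Set (Sym2 ℕ)} {r s : ℕ}

lemma of_hasCopy_red (h : HasCopy G R) : BuilderWinsIn G H R B r := by
  cases r with
  | zero => exact .inl h
  | succ r => exact .inl h

lemma of_hasCopy_blue (h : HasCopy H B) : BuilderWinsIn G H R B r := by
  cases r with
  | zero => exact .inr h
  | succ r => exact .inr (.inl h)

lemma succ (h : BuilderWinsIn G H R B r) : BuilderWinsIn G H R B (r + 1) := by
  induction r generalizing R B with
  | zero => exact h.elim of_hasCopy_red of_hasCopy_blue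
  | succ r ih =>
    obtain hG | hH | ⟨e, he, heR, heB, hred, hblue⟩ := h
    · exact of_hasCopy_red hG
    · exact of_hasCopy_blue hH
    · exact .inr (.inr ⟨e, he, heR, heB, ih hred, ih hblue⟩)

lemma mono_rounds (h : BuilderWinsIn G H R B r) (hrs : r ≤ s) : BuilderWinsIn G H R B s :=
  Nat.le_induction h (fun _ _ ↦ succ) s hrs

-- If `s(a, b)` is already colored, Builder skips this move and keeps the spare round.
lemma play (a b : ℕ) (hab : a ≠ b) (hred : BuilderWinsIn G H (insert s(a, b) R) B r)
    (hblue : BuilderWinsIn G H R (insert s(a, b) B) r) : BuilderWinsIn G H R B (r + 1) := by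
  by_cases hR : s(a, b) ∈ R
  · exact (Set.insert_eq_of_mem hR ▸ hred).succ
  by_cases hB : s(a, b) ∈ B
  · exact (Set.insert_eq_of_mem hB ▸ hblue).succ
  exact .inr (.inr ⟨s(a, b), by simpa, hR, hB, hred, hblue⟩)

end BuilderWinsIn

lemma hasCopy_cycleGraph {n : ℕ} {S : Set (Sym2 ℕ)} {f : Fin (n + 1) → ℕ}
    (hf : Function.Injective f) (hS : ∀ i, s(f i, f (i + 1)) ∈ S) :
    HasCopy (cycleGraph (n + 1)) S := by
  refine ⟨f, hf, fun i j hij ↦ ?_⟩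
  obtain ⟨-, h | h⟩ : i ≠ j ∧ (i - j = 1 ∨ j - i = 1) := by
    simpa [cycleGraph_eq_circulantGraph, circulantGraph_adj] using hij
  · obtain rfl := sub_eq_iff_eq_add'.1 h
    rw [Sym2.eq_swap]
    exact hS j
  · obtain rfl := sub_eq_iff_eq_add'.1 h
    exact hS i

/-- The consecutive entries of the list `l` are joined by edges of `S`; together with `l.Nodup`
this says that `l` lists the vertices of a path in `S`. -/
def IsWalkIn (S : Set (Sym2 ℕ)) (l : List ℕ) : Prop :=
  l.IsChain fun a b ↦ s(a, b) ∈ S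

namespace IsWalkIn

variable {S : Set (Sym2 ℕ)} {p q : List ℕ} {a b : ℕ}

@[simp, grind .]
lemma singleton : IsWalkIn S [a] :=
  List.isChain_singleton a

@[simp, grind =]
lemma cons_cons : IsWalkIn S (a :: b :: p) ↔ s(a, b) ∈ S ∧ IsWalkIn S (b :: p) :=
  List.isChain_cons_cons

@[grind ←]
protected lemma insert {e : Sym2 ℕ} (hp : IsWalkIn S p) : IsWalkIn (insert e S) p :=
  List.IsChain.imp (fun _ _ h ↦ Set.mem_insert_of_mem e h) hp

lemma reverse (hp : IsWalkIn S p) : IsWalkIn S p.reverse :=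
  List.isChain_reverse.2 <| List.IsChain.imp (fun _ _ h ↦ by rwa [Sym2.eq_swap]) hp

lemma append (hp : IsWalkIn S p) (hq : IsWalkIn S q) (ha : p.getLast? = some a)
    (hb : q.head? = some b) (hab : s(a, b) ∈ S) : IsWalkIn S (p ++ q) :=
  List.isChain_append.2 ⟨hp, hq, by simpa [ha, hb]⟩

lemma hasCopy_pathGraph {n : ℕ} (hp : IsWalkIn S p) (hnodup : p.Nodup) (hn : p.length = n) :
    HasCopy (pathGraph n) S := by
  subst hn
  have hS : ∀ i j : Fin p.length, i.val + 1 = j.val → s(p.get i, p.get j) ∈ S := by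
    rintro ⟨i, hi⟩ ⟨_, hj⟩ rfl
    exact List.isChain_iff_getElem.1 hp i hj
  refine ⟨p.get, hnodup.injective_get, fun i j hij ↦ ?_⟩
  obtain h | h := pathGraph_adj.1 hij
  · exact hS i j h
  · rw [Sym2.eq_swap]
    exact hS j i h

end IsWalkIn

namespace BuilderWinsIn

variable {V W : Type*} {G : SimpleGraph V} {H : SimpleGraph W} {R B : Set (Sym2 ℕ)} {r n : ℕ}

lemma of_red_square (a b c d : ℕ) (hwalk : IsWalkIn R [a, b, c, d, a])
    (hnodup : [a, b, c, d].Nodup) : BuilderWinsIn (cycleGraph 4) H R B r := by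
  refine of_hasCopy_red <| hasCopy_cycleGraph (f := [a, b, c, d].get) hnodup.injective_get ?_
  simpa [Fin.forall_fin_succ] using hwalk

lemma of_blue_path (p : List ℕ) (hwalk : IsWalkIn B p) (hnodup : p.Nodup) (hn : p.length = n) :
    BuilderWinsIn G (pathGraph n) R B r :=
  of_hasCopy_blue <| hwalk.hasCopy_pathGraph hnodup hn

-- The four edges between the ends of `p` and the ends of `q` form a four-cycle, and each of them
-- joins the two paths into one.
lemma of_two_blue_paths {p q : List ℕ} {a b c d : ℕ} (hnodup : (p ++ q).Nodup)
    (hn : p.length + q.length = n) (hp : IsWalkIn B p) (hq : IsWalkIn B q)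
    (ha : p.head? = some a) (hb : p.getLast? = some b) (hc : q.head? = some c)
    (hd : q.getLast? = some d) (hab : a ≠ b) (hcd : c ≠ d) (hbc : s(b, c) ∈ R) :
    BuilderWinsIn (cycleGraph 4) (pathGraph n) R B 3 := by
  have hends : [b, c, a, d].Nodup := by
    have := List.mem_of_mem_head? ha
    have := List.mem_of_mem_getLast? hb
    have := List.mem_of_mem_head? hc
    have := List.mem_of_mem_getLast? hd
    grind
  have hca : IsWalkIn (insert s(c, a) B) (q.reverse ++ p) :=
    hq.reverse.insert.append hp.insert (by simpa) ha (by simp)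
  have had : IsWalkIn (insert s(a, d) B) (p.reverse ++ q.reverse) :=
    hp.reverse.insert.append hq.reverse.insert (by simpa) (by simpa) (by simp)
  have hdb : IsWalkIn (insert s(d, b) B) (q ++ p.reverse) :=
    hq.insert.append hp.reverse.insert hd (by simpa) (by simp)
  refine play c a (by grind) ?_ (of_blue_path _ hca (by grind) (by grind))
  refine play a d (by grind) ?_ (of_blue_path _ had (by grind) (by grind))
  refine play d b (by grind) ?_ (of_blue_path _ hdb (by grind) (by grind))
  exact of_red_square b c a d (by simp [hbc]) hends

-- Once `xa` is red, `xb` and `xc` must both be blue, which inserts `x` between `b` and `c`.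
lemma of_red_star {a b c x z : ℕ} {l : List ℕ} (hnodup : (x :: z :: a :: b :: c :: l).Nodup)
    (hza : s(z, a) ∈ R) (hzb : s(z, b) ∈ R) (hzc : s(z, c) ∈ R)
    (hblue : IsWalkIn B (a :: b :: c :: l)) :
    BuilderWinsIn (cycleGraph 4) (pathGraph (l.length + 4)) R B 3 := by
  refine play x a (by grind) ?red_xa
    (of_blue_path (x :: a :: b :: c :: l) (by grind) (by grind) (by grind))
  refine play x b (by grind)
    (of_red_square x a z b (by grind [Sym2.eq_swap]) (by grind)) ?blue_xb
  exact play x c (by grind)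
    (of_red_square x a z c (by grind [Sym2.eq_swap]) (by grind))
    (of_blue_path (a :: b :: x :: c :: l) (by grind [Sym2.eq_swap]) (by grind) (by grind))

-- Every answer but blue `bd`, red `xa`, blue `xb` loses at once, and then `cx` has no good answer.
lemma of_red_triangle {a b c d x : ℕ} {l : List ℕ}
    (hnodup : (x :: a :: b :: c :: d :: l).Nodup) (hac : s(a, c) ∈ R) (had : s(a, d) ∈ R)
    (hcd : s(c, d) ∈ R) (hbc : s(b, c) ∈ R) (hab : s(a, b) ∈ B) (hdl : IsWalkIn B (d :: l)) :
    BuilderWinsIn (cycleGraph 4) (pathGraph (l.length + 4)) R B 4 := by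
  refine play b d (by grind)
    (of_red_square a c b d (by grind [Sym2.eq_swap]) (by grind)) ?blue_bd
  refine play x a (by grind) ?red_xa
    (of_blue_path (x :: a :: b :: d :: l) (by grind) (by grind) (by grind))
  refine play x b (by grind)
    (of_red_square a c b x (by grind [Sym2.eq_swap]) (by grind)) ?blue_xb
  exact play c x (by grind)
    (of_red_square a d c x (by grind [Sym2.eq_swap]) (by grind))
    (of_blue_path (c :: x :: b :: d :: l) (by grind) (by grind) (by grind))

end BuilderWinsIn

open BuilderWinsIn in
theorem builder_wins_case_B8_general {R B : Set (Sym2 ℕ)} {a b c d : ℕ} {l : List ℕ}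
    (hl : l ≠ []) (hnodup : (a :: b :: c :: d :: l).Nodup) (hab : s(a, b) ∈ B)
    (hbc : s(b, c) ∈ R) (hcd : s(c, d) ∈ R) (hdl : IsWalkIn B (d :: l)) :
    BuilderWinsIn (cycleGraph 4) (pathGraph (l.length + 4)) R B 6 := by
  obtain ⟨x, hx⟩ := Infinite.exists_notMem_finset (a :: b :: c :: d :: l).toFinset
  have hfresh : (x :: a :: b :: c :: d :: l).Nodup :=
    List.nodup_cons.2 ⟨by simpa using hx, hnodup⟩
  refine play a c (by grind) (play a d (by grind) ?red_ac_red_ad ?red_ac_blue_ad) ?blue_ac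
  case red_ac_red_ad =>
    exact of_red_triangle hfresh (by simp) (by simp) (by simp [hcd]) (by simp [hbc]) hab hdl
  case red_ac_blue_ad =>
    have hpath : IsWalkIn (insert s(a, d) B) (b :: a :: d :: l) := by grind [Sym2.eq_swap]
    exact (of_red_star (x := x) (z := c) (by grind) (by grind [Sym2.eq_swap])
      (by grind [Sym2.eq_swap]) (by grind) hpath).succ
  case blue_ac =>
    have hbac : IsWalkIn (insert s(a, c) B) [b, a, c] := by grind [Sym2.eq_swap]
    have hend : (d :: l).getLast? = some (l.getLast hl) := by grind
    exact (of_two_blue_paths (p := [b, a, c]) (q := d :: l) (by grind) (by grind) hbac hdl.insert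
      rfl rfl rfl hend (by grind) (by grind) hcd).mono_rounds (by decide)

/-- Case `B8`: in the online Ramsey game with targets red `C₄` and blue `P₆`,
from the position in which the five edges `v₁v₂, v₂v₃, v₃v₄, v₄v₅, v₅v₆` of a path on
six distinct vertices have been colored blue, red, red, blue, blue respectively,
Builder can force a red copy of `C₄` or a blue copy of `P₆` within at most 6 additional
rounds (so within at most 11 rounds in total). -/
theorem builder_wins_case_B8 (v : Fin 6 → ℕ) (hv : Function.Injective v) :
    BuilderWinsIn (cycleGraph 4) (pathGraph 6)
      {s(v 1, v 2), s(v 2, v 3)}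
      {s(v 0, v 1), s(v 3, v 4), s(v 4, v 5)} 6 := by
  have hnodup : [v 0, v 1, v 2, v 3, v 4, v 5].Nodup :=
    List.Nodup.map hv (l := [0, 1, 2, 3, 4, 5]) (by decide)
  exact builder_wins_case_B8_general (l := [v 4, v 5]) (by simp) hnodup (by simp) (by simp)
    (by simp) (by simp)
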